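/- arXiv:1111.2138 — 2 statements merged into one kernel-verified Lean document; each statement's English description precedes it below -/
import Mathlib

section
/- Let T be a nonnegative tensor of order m ≥ 2 and dimension n ≥ 2. If the majorization matrix M(T) is a primitive matrix, then T is a primitive tensor. -/
open Finset

/-- `(T x^{m-1})_i` for an order-`(k+1)` tensor encoded by its first index
and the `k` trailing indices (so for an order-`m` tensor, `k = m - 1`). -/
def tapp {ι : Type*} [Fintype ι] {k : ℕ} (T : ι → (Fin k → ι) → ℝ) (x : ι → ℝ) (i : ι) : ℝ :=
  ∑ β : Fin k → ι, T i β * ∏ l, x (β l)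

/-- All entries of the tensor are nonnegative. -/
def TNonneg {ι : Type*} {k : ℕ} (T : ι → (Fin k → ι) → ℝ) : Prop :=
  ∀ i β, 0 ≤ T i β

/-- `T` is strictly nonnegative: nonnegative, and `T x^{m-1} > 0` whenever `x > 0`. -/
def TStrictlyNonneg {ι : Type*} [Fintype ι] {k : ℕ} (T : ι → (Fin k → ι) → ℝ) : Prop :=
  TNonneg T ∧ ∀ x : ι → ℝ, (∀ i, 0 < x i) → ∀ i, 0 < tapp T x i

/-- Representation matrix `G(T)`: `G(T)_{ij}` is the sum of all `T_{i i₂…i_m}` with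
`j ∈ {i₂,…,i_m}`. -/
def repMat {ι : Type*} [Fintype ι] [DecidableEq ι] {k : ℕ}
    (T : ι → (Fin k → ι) → ℝ) : Matrix ι ι ℝ :=
  fun i j => ∑ β : Fin k → ι, if ∃ l, β l = j then T i β else 0

/-- Majorization matrix `M(T)`: `M(T)_{ij} = T_{i j j … j}`. -/
def majMat {ι : Type*} {k : ℕ} (T : ι → (Fin k → ι) → ℝ) : Matrix ι ι ℝ :=
  fun i j => T i (fun _ => j)

/-- A square matrix is reducible if some nonempty proper index subset `I` satisfies
`A i j = 0` for all `i ∈ I`, `j ∉ I`. -/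
def MatReducible {ι : Type*} [Fintype ι] (A : Matrix ι ι ℝ) : Prop :=
  ∃ I : Finset ι, I.Nonempty ∧ I ≠ Finset.univ ∧ ∀ i ∈ I, ∀ j ∉ I, A i j = 0

def MatIrreducible {ι : Type*} [Fintype ι] (A : Matrix ι ι ℝ) : Prop :=
  ¬ MatReducible A

/-- A square nonnegative matrix is primitive if some positive power is entrywise positive. -/
def MatPrimitive {ι : Type*} [Fintype ι] [DecidableEq ι] (A : Matrix ι ι ℝ) : Prop :=
  ∃ p : ℕ, 0 < p ∧ ∀ i j, 0 < (A ^ p) i j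

/-- `lam ∈ ℂ` is an eigenvalue of `T`:
`(T x^{m-1})_i = lam * x_i^{m-1}` for some nonzero `x ∈ ℂⁿ`. -/
def TIsEig {ι : Type*} [Fintype ι] {k : ℕ} (T : ι → (Fin k → ι) → ℝ) (lam : ℂ) : Prop :=
  ∃ x : ι → ℂ, x ≠ 0 ∧
    ∀ i, (∑ β : Fin k → ι, (T i β : ℂ) * ∏ l, x (β l)) = lam * x i ^ k

/-- Spectral radius: the supremum of moduli of eigenvalues. -/
noncomputable def specRad {ι : Type*} [Fintype ι] {k : ℕ}
    (T : ι → (Fin k → ι) → ℝ) : ℝ :=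
  sSup {r : ℝ | ∃ lam : ℂ, TIsEig T lam ∧ r = ‖lam‖}

/-- Induced tensor `T_I` on a subset `I` of the index set. -/
def inducedT {ι : Type*} {k : ℕ} (T : ι → (Fin k → ι) → ℝ) (I : Finset ι) :
    {i // i ∈ I} → (Fin k → {i // i ∈ I}) → ℝ :=
  fun i β => T i.val (fun l => (β l).val)

/-- The identity tensor: `E_{i₁…i_m} = 1` if all indices coincide, `0` otherwise. -/
def idT (ι : Type*) [DecidableEq ι] (k : ℕ) : ι → (Fin k → ι) → ℝ :=
  fun i β => if ∀ l, β l = i then 1 else 0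

/-- A tensor is reducible if some nonempty proper index subset `I` satisfies
`T_{i₁ i₂ … i_m} = 0` for all `i₁ ∈ I` and `i₂, …, i_m ∉ I`. -/
def TReducible {ι : Type*} [Fintype ι] {k : ℕ} (T : ι → (Fin k → ι) → ℝ) : Prop :=
  ∃ I : Finset ι, I.Nonempty ∧ I ≠ Finset.univ ∧
    ∀ i ∈ I, ∀ β : Fin k → ι, (∀ l, β l ∉ I) → T i β = 0

/-- The map `F_T(x)_i = ((T x^{m-1})_i)^{1/(m-1)}` (here `k = m - 1`). -/
noncomputable def FT {ι : Type*} [Fintype ι] {k : ℕ}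
    (T : ι → (Fin k → ι) → ℝ) (x : ι → ℝ) : ι → ℝ :=
  fun i => (tapp T x i) ^ ((k : ℝ)⁻¹)

/-- A tensor is primitive if some iterate of `F_T` is entrywise positive on every
nonzero nonnegative vector. -/
def TPrimitive {ι : Type*} [Fintype ι] {k : ℕ} (T : ι → (Fin k → ι) → ℝ) : Prop :=
  ∃ p : ℕ, 0 < p ∧ ∀ x : ι → ℝ, (∀ i, 0 ≤ x i) → x ≠ 0 → ∀ i, 0 < (FT T)^[p] x i

/-- `T` is weakly positive: all off-diagonal entries of `M(T)` are positive. -/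
def TWeaklyPositive {ι : Type*} {k : ℕ} (T : ι → (Fin k → ι) → ℝ) : Prop :=
  ∀ i j, i ≠ j → 0 < T i (fun _ => j)

/-- `T` is essentially positive: `T x^{m-1} > 0` for every nonzero `x ≥ 0`. -/
def TEssentiallyPositive {ι : Type*} [Fintype ι] {k : ℕ} (T : ι → (Fin k → ι) → ℝ) : Prop :=
  ∀ x : ι → ℝ, (∀ i, 0 ≤ x i) → x ≠ 0 → ∀ i, 0 < tapp T x i

/-- Hilbert's projective metric between two positive vectors:
`d(u,v) = log (max_i v_i/u_i) - log (min_i v_i/u_i)`. -/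
noncomputable def hilbertD {n : ℕ} (hn : 0 < n) (u v : Fin n → ℝ) : ℝ :=
  Real.log ((Finset.univ : Finset (Fin n)).sup' ⟨⟨0, hn⟩, Finset.mem_univ _⟩
      (fun i => v i / u i)) -
  Real.log ((Finset.univ : Finset (Fin n)).inf' ⟨⟨0, hn⟩, Finset.mem_univ _⟩
      (fun i => v i / u i))

theorem tapp_nonneg_aux {n k : ℕ} (T : Fin n → (Fin k → Fin n) → ℝ) (hT : TNonneg T)
    (x : Fin n → ℝ) (hx : ∀ i, 0 ≤ x i) (i : Fin n) : 0 ≤ tapp T x i :=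
  Finset.sum_nonneg fun β _ => mul_nonneg (hT i β) (Finset.prod_nonneg fun l _ => hx (β l))

theorem FT_nonneg_aux {n k : ℕ} (T : Fin n → (Fin k → Fin n) → ℝ) (hT : TNonneg T)
    (x : Fin n → ℝ) (hx : ∀ i, 0 ≤ x i) (i : Fin n) : 0 ≤ FT T x i :=
  Real.rpow_nonneg (tapp_nonneg_aux T hT x hx i) _

theorem FT_iter_nonneg_aux {n k : ℕ} (T : Fin n → (Fin k → Fin n) → ℝ) (hT : TNonneg T)
    (x : Fin n → ℝ) (hx : ∀ i, 0 ≤ x i) (q : ℕ) : ∀ i, 0 ≤ (FT T)^[q] x i := by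
  induction q with
  | zero => simpa using hx
  | succ q ih =>
    intro i
    rw [Function.iterate_succ_apply']
    exact FT_nonneg_aux T hT _ ih i

theorem FT_pos_aux {n k : ℕ} (T : Fin n → (Fin k → Fin n) → ℝ) (hT : TNonneg T)
    (x : Fin n → ℝ) (hx : ∀ i, 0 ≤ x i) (i j : Fin n) (hj : 0 < x j)
    (hM : 0 < majMat T i j) : 0 < FT T x i := by
  apply Real.rpow_pos_of_pos
  have h : T i (fun _ => j) * ∏ _l : Fin k, x j ≤ tapp T x i :=
    Finset.single_le_sum (f := fun β : Fin k → Fin n => T i β * ∏ l, x (β l))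
      (fun β _ => mul_nonneg (hT i β) (Finset.prod_nonneg fun l _ => hx (β l)))
      (Finset.mem_univ (fun _ => j))
  exact lt_of_lt_of_le (mul_pos hM (Finset.prod_pos fun _ _ => hj)) h

theorem FT_iter_pos_aux {n k : ℕ} (T : Fin n → (Fin k → Fin n) → ℝ) (hT : TNonneg T)
    (x : Fin n → ℝ) (hx : ∀ i, 0 ≤ x i) (j : Fin n) (hj : 0 < x j) (q : ℕ) :
    ∀ i, 0 < (majMat T ^ q) i j → 0 < (FT T)^[q] x i := by
  induction q with
  | zero =>
    intro i h
    by_cases hij : i = j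
    · subst hij; simpa using hj
    · simp [Matrix.one_apply, hij] at h
  | succ q ih =>
    intro i h
    rw [pow_succ', Matrix.mul_apply] at h
    obtain ⟨l, -, hl⟩ : ∃ l ∈ Finset.univ, 0 < majMat T i l * (majMat T ^ q) l j := by
      by_contra! hc
      exact absurd h (not_lt.mpr (Finset.sum_nonpos hc))
    have h0 : 0 ≤ majMat T i l := hT i _
    rw [Function.iterate_succ_apply']
    have h1 : 0 < majMat T i l := by
      rcases h0.eq_or_lt with h2 | h2
      · simp [← h2] at hl
      · exact h2
    exact FT_pos_aux T hT _ (FT_iter_nonneg_aux T hT x hx q) i l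
      (ih l (pos_of_mul_pos_right hl h0)) h1

theorem majorization_primitive_imp_tensor_primitive
    (m n : ℕ) (hm : 2 ≤ m) (hn : 2 ≤ n)
    (T : Fin n → (Fin (m - 1) → Fin n) → ℝ) (hT : TNonneg T)
    (hM : MatPrimitive (majMat T)) :
    TPrimitive T := by
  obtain ⟨p, hp, h⟩ := hM
  refine ⟨p, hp, fun x hx hx0 i => ?_⟩
  obtain ⟨j, hj⟩ := Function.ne_iff.mp hx0
  exact FT_iter_pos_aux T hT x hx j (lt_of_le_of_ne (hx j) (Ne.symm hj)) p i (h i j)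
end

section
/- For any nonnegative tensor T of order m ≥ 2 and dimension n ≥ 2, the spectral radius ρ(T) is itself an eigenvalue of T, and there is a nonnegative real eigenvector x ∈ ℝ^n_+ \ {0} with (T x^{m-1})_i = ρ(T) x_i^{m-1} for all i. -/
open Finset

/-- Sub-eigenpairs: `x` in the simplex, `lam ≥ 0`, `lam x^k ≤ T x^k`. -/
def SubP {n k : ℕ} (T : Fin n → (Fin k → Fin n) → ℝ) (l : ℝ) (x : Fin n → ℝ) : Prop :=
  0 ≤ l ∧ x ∈ stdSimplex ℝ (Fin n) ∧ ∀ i, l * x i ^ k ≤ tapp T x i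

theorem tapp_smul {n k : ℕ} (T : Fin n → (Fin k → Fin n) → ℝ) (c : ℝ) (x : Fin n → ℝ) (i : Fin n) :
    tapp T (fun j => c * x j) i = c ^ k * tapp T x i := by
  unfold tapp
  rw [Finset.mul_sum]
  refine Finset.sum_congr rfl fun β _ => ?_
  rw [Finset.prod_mul_distrib]
  simp
  ring

theorem tapp_mono {n k : ℕ} {T : Fin n → (Fin k → Fin n) → ℝ} (hT : TNonneg T) {x y : Fin n → ℝ}
    (hx : ∀ i, 0 ≤ x i) (hxy : ∀ i, x i ≤ y i) (i : Fin n) : tapp T x i ≤ tapp T y i := by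
  unfold tapp
  refine Finset.sum_le_sum fun β _ => mul_le_mul_of_nonneg_left ?_ (hT i β)
  exact Finset.prod_le_prod (fun _ _ => hx _) (fun _ _ => hxy _)

theorem tapp_strict {n k : ℕ} (hk : k ≠ 0) {T : Fin n → (Fin k → Fin n) → ℝ}
    (hT : ∀ i β, 0 < T i β) {x y : Fin n → ℝ}
    (hx : ∀ i, 0 ≤ x i) (hxy : ∀ i, x i ≤ y i) (j : Fin n) (hj : x j < y j) (i : Fin n) :
    tapp T x i < tapp T y i := by
  unfold tapp
  refine Finset.sum_lt_sum (fun β _ => mul_le_mul_of_nonneg_left ?_ (hT i β).le)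
    ⟨fun _ => j, Finset.mem_univ _, mul_lt_mul_of_pos_left ?_ (hT i _)⟩
  · exact Finset.prod_le_prod (fun _ _ => hx _) (fun _ _ => hxy _)
  · simpa using pow_lt_pow_left₀ hj (hx j) hk

theorem subP_bound {n k : ℕ} {T : Fin n → (Fin k → Fin n) → ℝ} (hT : TNonneg T)
    {l : ℝ} {x : Fin n → ℝ} (h : SubP T l x) : l ≤ ∑ i, ∑ β, T i β := by
  obtain ⟨hl, ⟨hx0, hx1⟩, h⟩ := h
  have : Nonempty (Fin n) := by
    by_contra hne
    rw [not_nonempty_iff] at hne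
    simp at hx1
  obtain ⟨i, hi⟩ := Finite.exists_max x
  have hpos : 0 < x i := by
    by_contra hc
    have : ∑ j, x j ≤ 0 := Finset.sum_nonpos fun j _ => (hi j).trans (not_lt.1 hc)
    linarith
  have h1 : tapp T x i ≤ (∑ β, T i β) * x i ^ k := by
    unfold tapp
    rw [Finset.sum_mul]
    refine Finset.sum_le_sum fun β _ => mul_le_mul_of_nonneg_left ?_ (hT i β)
    calc ∏ l, x (β l) ≤ ∏ l : Fin k, x i := Finset.prod_le_prod (fun _ _ => hx0 _) (fun _ _ => hi _)
      _ = _ := by simp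
  have h2 : l ≤ ∑ β, T i β := le_of_mul_le_mul_right ((h i).trans h1) (pow_pos hpos k)
  exact h2.trans (Finset.single_le_sum (f := fun i => ∑ β, T i β)
    (fun i _ => Finset.sum_nonneg fun β _ => hT i β) (Finset.mem_univ i))

theorem subP_normalize {n k : ℕ} {T : Fin n → (Fin k → Fin n) → ℝ} {l : ℝ} (hl : 0 ≤ l)
    {x : Fin n → ℝ} (hx : ∀ i, 0 ≤ x i) (hne : x ≠ 0) (h : ∀ i, l * x i ^ k ≤ tapp T x i) :
    ∃ y, SubP T l y := by
  have hs : 0 < ∑ i, x i := by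
    obtain ⟨j, hj⟩ := Function.ne_iff.1 hne
    exact Finset.sum_pos' (fun i _ => hx i) ⟨j, Finset.mem_univ _, lt_of_le_of_ne (hx j) (Ne.symm hj)⟩
  refine ⟨fun j => (∑ i, x i)⁻¹ * x j, hl, ⟨fun j => by have := hx j; positivity, ?_⟩, fun i => ?_⟩
  · rw [← Finset.mul_sum, inv_mul_cancel₀ hs.ne']
  · rw [tapp_smul, mul_pow]
    have := mul_le_mul_of_nonneg_left (h i) (by positivity : 0 ≤ (∑ i, x i)⁻¹ ^ k)
    linarith

theorem tapp_continuous {n k : ℕ} (T : Fin n → (Fin k → Fin n) → ℝ) (i : Fin n) :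
    Continuous fun p : ℝ × (Fin n → ℝ) => tapp (fun i β => T i β + p.1) p.2 i := by
  unfold tapp
  fun_prop

theorem pos_case {n k : ℕ} (hn : 0 < n) (hk : k ≠ 0) {T : Fin n → (Fin k → Fin n) → ℝ}
    (hT : ∀ i β, 0 < T i β) :
    ∃ l x, SubP T l x ∧ (∀ i, tapp T x i = l * x i ^ k) ∧ ∀ l' x', SubP T l' x' → l' ≤ l := by
  have hT' : TNonneg T := fun i β => (hT i β).le
  have hc : ∀ i, Continuous fun x : Fin n → ℝ => tapp T x i := by
    intro i; unfold tapp; fun_prop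
  have hcomp : IsCompact {p : ℝ × (Fin n → ℝ) | SubP T p.1 p.2} := by
    refine IsCompact.of_isClosed_subset
      ((isCompact_Icc (a := (0:ℝ)) (b := ∑ i, ∑ β, T i β)).prod (isCompact_stdSimplex ℝ (Fin n))) ?_ ?_
    · have h3 : {p : ℝ × (Fin n → ℝ) | SubP T p.1 p.2} =
        {p | 0 ≤ p.1} ∩ (Prod.snd ⁻¹' (stdSimplex ℝ (Fin n)) ∩
          ⋂ i, {p | p.1 * p.2 i ^ k ≤ tapp T p.2 i}) := by
        ext p; simp [SubP]
      rw [h3]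
      refine (isClosed_le continuous_const continuous_fst).inter
        (((isClosed_stdSimplex ℝ (Fin n)).preimage continuous_snd).inter
        (isClosed_iInter fun i => isClosed_le (by fun_prop) ((hc i).comp continuous_snd)))
    · rintro ⟨l, x⟩ h
      exact ⟨⟨h.1, subP_bound hT' h⟩, h.2.1⟩
  have hne : {p : ℝ × (Fin n → ℝ) | SubP T p.1 p.2}.Nonempty := by
    obtain ⟨y, hy⟩ := subP_normalize (T := T) (l := 0) le_rfl (x := fun _ => 1) (fun _ => zero_le_one)
      (fun h => one_ne_zero (congrFun h ⟨0, hn⟩)) (fun i => by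
        simp only [zero_mul, tapp]
        exact Finset.sum_nonneg fun β _ => by simpa using hT' i β)
    exact ⟨(0, y), hy⟩
  obtain ⟨⟨l, x⟩, hp, hmax⟩ := hcomp.exists_isMaxOn hne continuous_fst.continuousOn
  have hmax' : ∀ l' x', SubP T l' x' → l' ≤ l := fun l' x' h => hmax (a := (l', x')) h
  refine ⟨l, x, hp, ?_, hmax'⟩
  by_contra hcon
  push Not at hcon
  obtain ⟨j, hj⟩ := hcon
  obtain ⟨hl, ⟨hx0, hx1⟩, h⟩ := hp
  have hj' : l * x j ^ k < tapp T x j := lt_of_le_of_ne (h j) (Ne.symm hj)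
  have htn : ∀ i, 0 ≤ tapp T x i := fun i => (mul_nonneg hl (pow_nonneg (hx0 i) k)).trans (h i)
  -- the k-th roots
  obtain ⟨y, hy0, hyk⟩ : ∃ y : Fin n → ℝ, (∀ i, 0 ≤ y i) ∧ ∀ i, y i ^ k = tapp T x i :=
    ⟨fun i => tapp T x i ^ ((k:ℝ)⁻¹), fun i => Real.rpow_nonneg (htn i) _,
      fun i => Real.rpow_inv_natCast_pow (htn i) hk⟩
  obtain ⟨c, hc0, hck⟩ : ∃ c : ℝ, 0 ≤ c ∧ c ^ k = l :=
    ⟨l ^ ((k:ℝ)⁻¹), Real.rpow_nonneg hl _, Real.rpow_inv_natCast_pow hl hk⟩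
  have h1 : ∀ i, c * x i ≤ y i := fun i => by
    refine le_of_pow_le_pow_left₀ hk (hy0 i) ?_
    rw [mul_pow, hck, hyk]; exact h i
  have h2 : c * x j < y j := by
    refine lt_of_pow_lt_pow_left₀ k (hy0 j) ?_
    rw [mul_pow, hck, hyk]; exact hj'
  have h3 : ∀ i, l * y i ^ k < tapp T y i := fun i => by
    have := tapp_strict hk hT (fun i => mul_nonneg hc0 (hx0 i)) h1 j h2 i
    rwa [tapp_smul, hck, ← hyk] at this
  have hyj : 0 < y j := lt_of_le_of_lt (mul_nonneg hc0 (hx0 j)) h2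
  -- find delta
  have hev : ∀ i, ∀ᶠ d in nhdsWithin l (Set.Ioi l), d * y i ^ k ≤ tapp T y i := fun i => by
    have : Filter.Tendsto (fun d : ℝ => d * y i ^ k) (nhdsWithin l (Set.Ioi l)) (nhds (l * y i ^ k)) :=
      ((continuous_id.mul continuous_const).tendsto l).mono_left nhdsWithin_le_nhds
    exact (this.eventually_lt_const (h3 i)).mono fun _ h => h.le
  obtain ⟨d, hd, hdl⟩ := ((Filter.eventually_all.2 hev).and self_mem_nhdsWithin).exists
  have hdl : l < d := hdl
  obtain ⟨z, hz⟩ := subP_normalize (T := T) (hl.trans hdl.le) hy0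
    (fun h => hyj.ne' (congrFun h j)) hd
  exact absurd (hmax' d z hz) (not_le.2 hdl)

theorem subP_of_eig {n k : ℕ} {T : Fin n → (Fin k → Fin n) → ℝ} (hT : TNonneg T) {lam : ℂ}
    (h : TIsEig T lam) : ∃ x, SubP T ‖lam‖ x := by
  obtain ⟨x, hx, h⟩ := h
  refine subP_normalize (norm_nonneg _) (x := fun i => ‖x i‖) (fun i => norm_nonneg _) ?_ ?_
  · intro h0
    exact hx (funext fun i => norm_eq_zero.1 (congrFun h0 i))
  · intro i
    rw [← norm_pow, ← norm_mul, ← h i]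
    refine (norm_sum_le _ _).trans (le_of_eq ?_)
    unfold tapp
    refine Finset.sum_congr rfl fun β _ => ?_
    rw [norm_mul, norm_prod, Complex.norm_real, Real.norm_of_nonneg (hT i β)]

theorem limit_case {n k : ℕ} (hn : 0 < n) (hk : k ≠ 0) {T : Fin n → (Fin k → Fin n) → ℝ}
    (hT : TNonneg T) :
    ∃ l x, 0 ≤ l ∧ x ∈ stdSimplex ℝ (Fin n) ∧ (∀ i, tapp T x i = l * x i ^ k) ∧
      ∀ l' x', SubP T l' x' → l' ≤ l := by
  have he : ∀ N : ℕ, 0 < 1 / ((N:ℝ) + 1) := fun N => by positivity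
  have hpos := fun N : ℕ => pos_case hn hk (T := fun i β => T i β + 1 / ((N:ℝ) + 1))
    (fun i β => add_pos_of_nonneg_of_pos (hT i β) (he N))
  choose l x hS hE hM using hpos
  have hmem : ∀ N, (l N, x N) ∈ Set.Icc (0:ℝ) (∑ i, ∑ β, (T i β + 1)) ×ˢ stdSimplex ℝ (Fin n) := by
    intro N
    refine ⟨⟨(hS N).1, (subP_bound (fun i β => ?_) (hS N)).trans ?_⟩, (hS N).2.1⟩
    · exact add_nonneg (hT i β) (he N).le
    · refine Finset.sum_le_sum fun i _ => Finset.sum_le_sum fun β _ => ?_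
      have : 1 / ((N:ℝ) + 1) ≤ 1 := by
        rw [div_le_one (by positivity)]
        have : (0:ℝ) ≤ N := N.cast_nonneg
        linarith
      linarith
  obtain ⟨⟨L, X⟩, hLX, φ, hφ, hlim⟩ := (isCompact_Icc.prod (isCompact_stdSimplex ℝ (Fin n))).tendsto_subseq hmem
  have hl : Filter.Tendsto (fun N => l (φ N)) Filter.atTop (nhds L) :=
    (continuous_fst.tendsto _).comp hlim
  have hx : Filter.Tendsto (fun N => x (φ N)) Filter.atTop (nhds X) :=
    (continuous_snd.tendsto _).comp hlim
  have heps : Filter.Tendsto (fun N => 1 / ((φ N : ℝ) + 1)) Filter.atTop (nhds 0) :=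
    (tendsto_one_div_add_atTop_nhds_zero_nat (𝕜 := ℝ)).comp hφ.tendsto_atTop
  refine ⟨L, X, hLX.1.1, hLX.2, fun i => ?_, fun l' x' h => ?_⟩
  · have h1 := ((tapp_continuous T i).tendsto (0, X)).comp (heps.prodMk_nhds hx)
    have h2 : Filter.Tendsto (fun N => l (φ N) * x (φ N) i ^ k) Filter.atTop (nhds (L * X i ^ k)) :=
      hl.mul (((continuous_apply i).tendsto X).comp hx |>.pow k)
    have h3 := tendsto_nhds_unique h1 (h2.congr fun N => (hE (φ N) i).symm)
    simpa using h3
  · refine ge_of_tendsto' hl fun N => hM _ l' x' ⟨h.1, h.2.1, fun i => (h.2.2 i).trans ?_⟩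
    unfold tapp
    refine Finset.sum_le_sum fun β _ => mul_le_mul_of_nonneg_right ?_
      (Finset.prod_nonneg fun _ _ => h.2.1.1 _)
    linarith [he (φ N)]

theorem specRad_is_eigenvalue_with_nonneg_eigenvector
    (m n : ℕ) (hm : 2 ≤ m) (hn : 2 ≤ n)
    (T : Fin n → (Fin (m - 1) → Fin n) → ℝ) (hT : TNonneg T) :
    TIsEig T (specRad T : ℂ) ∧
      ∃ x : Fin n → ℝ, x ≠ 0 ∧ (∀ i, 0 ≤ x i) ∧
        ∀ i, tapp T x i = specRad T * x i ^ (m - 1) := by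
  obtain ⟨l, x, hl, hx, hE, hM⟩ := limit_case (by omega) (by omega) hT
  have hne : x ≠ 0 := by
    rintro rfl
    simpa using hx.2
  have heig : TIsEig T (l : ℂ) := by
    refine ⟨fun i => (x i : ℂ), fun h => hne (funext fun i => ?_), fun i => ?_⟩
    · simpa using congrFun h i
    · have := congrArg (fun r : ℝ => (r : ℂ)) (hE i)
      simpa [tapp] using this
  have hs : specRad T = l := by
    refine IsGreatest.csSup_eq ⟨⟨l, heig, ?_⟩, ?_⟩
    · rw [Complex.norm_real, Real.norm_of_nonneg hl]
    · rintro r ⟨lam, h, rfl⟩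
      obtain ⟨z, hz⟩ := subP_of_eig hT h
      exact hM _ z hz
  rw [hs]
  exact ⟨heig, x, hne, hx.1, hE⟩
end
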